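/- arXiv:2006.00355 — 6 statements merged into one kernel-verified Lean document; each statement's English description precedes it below -/
import Mathlib

section
/- Let p be an odd prime, n ≥ 4 an integer, and t an integer with 1 ≤ t < n; set d = gcd(t, n) and assume n ≥ 3d and that n/d is even. Let c ∈ F_{p^n} with c ≠ 1, and let G : F_{p^n} → F_{p^n} be given by G(x) = x^{p^n−2} + x^{p^t}. Then the c-differential uniformity of G satisfies p^d + 2 ≤ δ_{G,c} ≤ p^t + 4. -/
open Finset

/-- The `(c,a,b)` entry of the `c`-Difference Distribution Table of `G`:
the number of `x` with `G (x + a) - c * G x = b`. -/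
def cddt {F : Type*} [Field F] [Fintype F] [DecidableEq F]
    (G : F → F) (c a b : F) : ℕ :=
  (Finset.univ.filter fun x : F => G (x + a) - c * G x = b).card

/-- The `c`-differential uniformity of `G`: the maximum entry of the `c`-DDT,
where `a ≠ 0` is required only when `c = 1`. -/
def cdu {F : Type*} [Field F] [Fintype F] [DecidableEq F]
    (G : F → F) (c : F) : ℕ :=
  ((Finset.univ : Finset (F × F)).filter fun p => c = 1 → p.1 ≠ 0).sup
    fun p => cddt G c p.1 p.2

/-!
For the lower bound, look at `a = b = 0`: since `c ≠ 1`, the entry there counts the zeros of `G`,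
that is, `0` and the solutions of `x ^ (p ^ t + 1) = -1`. Put `d = gcd(t, n)` and `Q = p ^ d`.
As `n / d` is even, `2 * (Q + 1)` divides `p ^ n - 1`, so `x ^ (Q + 1) = -1` has `Q + 1` solutions.
Raising to the power `Q` exchanges such an `x` with `-x⁻¹`; as `t / d` is odd, doing so `t / d`
times gives `x ^ p ^ t = -x⁻¹`.

For the upper bound, clearing denominators turns `G (x + a) - c * G x = b` into a polynomial
equation of degree `p ^ t + 2` with leading coefficient `1 - c`. It captures every solution except
possibly `x = 0` and `x = -a`.
-/

lemma odd_div_gcd_of_even_div_gcd {t n : ℕ} (hn : n ≠ 0) (h : Even (n / t.gcd n)) :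
    Odd (t / t.gcd n) :=
  have hcop : (t / t.gcd n).Coprime (n / t.gcd n) :=
    Nat.coprime_div_gcd_div_gcd (Nat.gcd_pos_of_pos_right t (Nat.pos_of_ne_zero hn))
  (hcop.coprime_dvd_right h.two_dvd).odd_of_right

lemma two_mul_succ_dvd_pow_sub_one {q m : ℕ} (hq : Odd q) (hm : Even m) :
    2 * (q + 1) ∣ q ^ m - 1 := by
  obtain ⟨u, rfl⟩ := hq
  refine Dvd.dvd.trans ⟨u, ?_⟩ (Nat.pow_sub_one_dvd_pow_sub_one _ hm.two_dvd)
  rw [Nat.sub_eq_iff_eq_add (Nat.one_le_pow _ _ (by omega))]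
  ring

lemma pow_odd_pow_eq_neg_inv {M : Type*} [DivisionMonoid M] [HasDistribNeg M] {x : M} {q s : ℕ}
    (hq : Odd q) (hs : Odd s) (hx : x ^ q = -x⁻¹) : x ^ q ^ s = -x⁻¹ := by
  have hx' : (-x⁻¹) ^ q = x := by rw [hq.neg_pow, inv_pow, hx, inv_neg, inv_inv, neg_neg]
  obtain ⟨j, rfl⟩ := hs
  induction j with
  | zero => simpa using hx
  | succ j ih => rw [show 2 * (j + 1) + 1 = 2 * j + 1 + 1 + 1 by ring, pow_succ, pow_succ,
      pow_mul, pow_mul, ih, hx', hx]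

lemma pow_card_sub_two_eq_inv {F : Type*} [Field F] [Fintype F] (hF : 2 < Fintype.card F) (x : F) :
    x ^ (Fintype.card F - 2) = x⁻¹ := by
  obtain rfl | hx := eq_or_ne x 0
  · rw [zero_pow (by omega), inv_zero]
  · apply eq_inv_of_mul_eq_one_left
    rw [← pow_succ, show Fintype.card F - 2 + 1 = Fintype.card F - 1 by omega,
      FiniteField.pow_card_sub_one_eq_one x hx]

section RootsOfUnity

open Polynomial

lemma card_nthRootsFinset_neg_one_of_isPrimitiveRoot {R : Type*} [CommRing R] [IsDomain R] {ζ : R}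
    {m : ℕ} (hζ : IsPrimitiveRoot ζ (2 * m)) :
    #(nthRootsFinset m (-1 : R)) = m := by
  classical
  obtain rfl | hm := m.eq_zero_or_pos
  · simp
  have hζm : ζ ^ m = -1 := (hζ.pow (by positivity) (mul_comm 2 m)).eq_neg_one_of_two_right
  have hζsq : IsPrimitiveRoot (ζ ^ 2) m := hζ.pow (by positivity) rfl
  rw [nthRootsFinset_def, Multiset.toFinset_card_of_nodup (hζsq.nthRoots_nodup (by simp)),
    hζsq.card_nthRoots, if_pos ⟨ζ, hζm⟩]

lemma exists_isPrimitiveRoot_of_dvd_card_sub_one {F : Type*} [Field F] [Fintype F] {k : ℕ}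
    (hk : k ∣ Fintype.card F - 1) : ∃ ζ : F, IsPrimitiveRoot ζ k := by
  obtain ⟨m, hm⟩ := hk
  obtain ⟨g, hg⟩ := IsCyclic.exists_ofOrder_eq_natCard (α := Fˣ)
  rw [Nat.card_units, Nat.card_eq_fintype_card] at hg
  have hgF : IsPrimitiveRoot (g : F) (Fintype.card F - 1) :=
    IsPrimitiveRoot.coe_units_iff.mpr (hg ▸ IsPrimitiveRoot.orderOf g)
  exact ⟨g ^ m, hgF.pow (Nat.sub_pos_of_lt Fintype.one_lt_card) (hm.trans (mul_comm k m))⟩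

end RootsOfUnity

section Polynomial

open Polynomial

/-- The equation `(x + a)⁻¹ + (x + a) ^ q - c * (x⁻¹ + x ^ q) = b`, which the `c`-DDT entry at
`(a, b)` of `x ↦ x⁻¹ + x ^ q` counts, with its denominators cleared by the factor `x * (x + a)`. -/
noncomputable def cddtPolynomial {R : Type*} [CommRing R] (q : ℕ) (c a b : R) : R[X] :=
  X * (X + C a) * ((X + C a) ^ q - C c * X ^ q - C b) + (X - C c * (X + C a))

lemma natDegree_cddtPolynomial_le {R : Type*} [CommRing R] (q : ℕ) (c a b : R) :
    (cddtPolynomial q c a b).natDegree ≤ q + 2 := by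
  refine natDegree_add_le_of_degree_le ?_ ?_
  · rw [add_comm q 2]
    refine natDegree_mul_le_of_le ?_ ?_ <;> compute_degree
  · compute_degree
    omega

lemma coeff_cddtPolynomial {R : Type*} [CommRing R] {q : ℕ} (hq : q ≠ 0) (c a b : R) :
    (cddtPolynomial q c a b).coeff (q + 2) = 1 - c := by
  have hquad : (X * (X + C a)).coeff 2 = 1 := by simp [coeff_X]
  have hlin : (X - C c * (X + C a)).natDegree ≤ 1 := by compute_degree
  have hpow : ((X + C a) ^ q - C c * X ^ q - C b).coeff q = 1 - c := by
    simp [coeff_X_add_C_pow, coeff_C, hq]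
  rw [cddtPolynomial, coeff_add, coeff_eq_zero_of_natDegree_lt (hlin.trans_lt (by omega)),
    add_zero, add_comm q 2, coeff_mul_add_eq_of_natDegree_le ?_ ?_, hquad, hpow, one_mul]
  · compute_degree
  · compute_degree

lemma cddtPolynomial_ne_zero {R : Type*} [CommRing R] {q : ℕ} (hq : q ≠ 0) {c : R} (hc : c ≠ 1)
    (a b : R) : cddtPolynomial q c a b ≠ 0 := fun h =>
  hc <| (sub_eq_zero.mp <| by rw [← coeff_cddtPolynomial hq c a b, h, coeff_zero]).symm

lemma isRoot_cddtPolynomial {K : Type*} [Field K] {q : ℕ} {c a b x : K} (hx : x ≠ 0)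
    (hxa : x + a ≠ 0) (h : (x + a)⁻¹ + (x + a) ^ q - c * (x⁻¹ + x ^ q) = b) :
    (cddtPolynomial q c a b).IsRoot x := by
  simp only [cddtPolynomial, ← h, IsRoot.def, eval_add, eval_sub, eval_mul, eval_pow, eval_X,
    eval_C]
  field_simp
  ring

end Polynomial

section DifferentialUniformity

variable {F : Type*} [Field F] [Fintype F] [DecidableEq F] {G : F → F} {c : F} {q : ℕ}

lemma cdu_le_iff {k : ℕ} : cdu G c ≤ k ↔ ∀ a b, (c = 1 → a ≠ 0) → cddt G c a b ≤ k := by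
  simp [cdu, Finset.sup_le_iff]

lemma cddt_zero_zero (hc : c ≠ 1) : cddt G c 0 0 = #{x | G x = 0} := by
  have h (x : F) : G x - c * G x = 0 ↔ G x = 0 := by
    rw [← one_sub_mul, mul_eq_zero, or_iff_right (sub_ne_zero.mpr hc.symm)]
  simp only [cddt, add_zero, h]

lemma card_zeros_le_cdu (hc : c ≠ 1) : #{x | G x = 0} ≤ cdu G c :=
  cddt_zero_zero (G := G) hc ▸ cdu_le_iff.mp le_rfl 0 0 (absurd · hc)

lemma cddt_inv_add_pow_le (hq : q ≠ 0) (hc : c ≠ 1) (a b : F) :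
    cddt (fun x : F => x⁻¹ + x ^ q) c a b ≤ q + 4 := by
  set P := cddtPolynomial q c a b
  have hsub : ({x | (x + a)⁻¹ + (x + a) ^ q - c * (x⁻¹ + x ^ q) = b} : Finset F) ⊆
      {0, -a} ∪ P.roots.toFinset := by
    intro x hx
    rw [mem_filter_univ] at hx
    by_cases hx0 : x = 0
    · simp [hx0]
    by_cases hxa : x + a = 0
    · simp [eq_neg_of_add_eq_zero_left hxa]
    · exact mem_union_right _ <| Multiset.mem_toFinset.mpr <|
        (Polynomial.mem_roots (cddtPolynomial_ne_zero hq hc a b)).mpr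
          (isRoot_cddtPolynomial hx0 hxa hx)
  calc cddt (fun x : F => x⁻¹ + x ^ q) c a b
    _ ≤ #({0, -a} ∪ P.roots.toFinset) := card_le_card hsub
    _ ≤ #{0, -a} + #P.roots.toFinset := card_union_le _ _
    _ ≤ 2 + (q + 2) := Nat.add_le_add card_le_two <| P.roots.toFinset_card_le.trans <|
        P.card_roots'.trans (natDegree_cddtPolynomial_le q c a b)
    _ = q + 4 := by ring

lemma cdu_inv_add_pow_le (hq : q ≠ 0) (hc : c ≠ 1) :
    cdu (fun x : F => x⁻¹ + x ^ q) c ≤ q + 4 :=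
  cdu_le_iff.mpr fun a b _ => cddt_inv_add_pow_le hq hc a b

lemma add_two_le_card_zeros_inv_add_pow {s : ℕ} (hq : Odd q) (hs : Odd s)
    (hdvd : 2 * (q + 1) ∣ Fintype.card F - 1) :
    q + 2 ≤ #{x : F | x⁻¹ + x ^ q ^ s = 0} := by
  obtain ⟨ζ, hζ⟩ := exists_isPrimitiveRoot_of_dvd_card_sub_one hdvd
  set S := Polynomial.nthRootsFinset (q + 1) (-1 : F)
  have mem_S {x : F} : x ∈ S ↔ x ^ (q + 1) = -1 := Polynomial.mem_nthRootsFinset q.succ_pos _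
  have zero_notMem : (0 : F) ∉ S := by simp [mem_S]
  have hsub : insert 0 S ⊆ ({x | x⁻¹ + x ^ q ^ s = 0} : Finset F) := by
    intro x hx
    rw [mem_filter_univ, add_comm, add_eq_zero_iff_eq_neg]
    refine pow_odd_pow_eq_neg_inv hq hs ?_
    obtain rfl | hxS := mem_insert.mp hx
    · simp [hq.pos.ne']
    · have hx0 : x ≠ 0 := ne_of_mem_of_not_mem hxS zero_notMem
      rw [← neg_one_mul, ← mem_S.mp hxS, pow_succ, mul_inv_cancel_right₀ hx0]
  calc q + 2 = #(insert 0 S) := by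
        rw [card_insert_of_notMem zero_notMem,
          card_nthRootsFinset_neg_one_of_isPrimitiveRoot hζ]
    _ ≤ #{x : F | x⁻¹ + x ^ q ^ s = 0} := card_le_card hsub

end DifferentialUniformity

theorem cdu_inverse_plus_monomial_odd_char_even_case_general
    {F : Type*} [Field F] [Fintype F] [DecidableEq F]
    (q n t : ℕ) (hq : Odd q) (heven : Even (n / Nat.gcd t n))
    (hF : Fintype.card F = q ^ n)
    (c : F) (hc : c ≠ 1)
    (G : F → F) (hG : ∀ x : F, G x = x ^ (q ^ n - 2) + x ^ q ^ t) :
    q ^ Nat.gcd t n + 2 ≤ cdu G c ∧ cdu G c ≤ q ^ t + 4 := by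
  set d := Nat.gcd t n
  have hcard : 1 < Fintype.card F := Fintype.one_lt_card
  have hodd : Odd (Fintype.card F) := hF ▸ hq.pow
  have hn : n ≠ 0 := by rintro rfl; simp [hF] at hcard
  obtain rfl : G = fun x => x⁻¹ + x ^ q ^ t := funext fun x => by
    rw [hG, ← hF, pow_card_sub_two_eq_inv (by grind)]
  refine ⟨?_, cdu_inv_add_pow_le (pow_ne_zero t hq.pos.ne') hc⟩
  have hdvd : 2 * (q ^ d + 1) ∣ Fintype.card F - 1 := by
    rw [hF, ← Nat.mul_div_cancel' (Nat.gcd_dvd_right t n), pow_mul]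
    exact two_mul_succ_dvd_pow_sub_one hq.pow heven
  have hzeros := add_two_le_card_zeros_inv_add_pow hq.pow
    (odd_div_gcd_of_even_div_gcd hn heven) hdvd
  rw [← pow_mul, Nat.mul_div_cancel' (Nat.gcd_dvd_left t n)] at hzeros
  exact hzeros.trans (card_zeros_le_cdu hc)

theorem cdu_inverse_plus_monomial_odd_char_even_case
    {F : Type*} [Field F] [Fintype F] [DecidableEq F]
    (p n t : ℕ) (hp : p.Prime) (hodd : Odd p)
    (hn : 4 ≤ n) (ht1 : 1 ≤ t) (htn : t < n)
    (h3d : 3 * Nat.gcd t n ≤ n) (heven : Even (n / Nat.gcd t n))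
    (hF : Fintype.card F = p ^ n)
    (c : F) (hc : c ≠ 1)
    (G : F → F) (hG : ∀ x : F, G x = x ^ (p ^ n - 2) + x ^ p ^ t) :
    p ^ Nat.gcd t n + 2 ≤ cdu G c ∧ cdu G c ≤ p ^ t + 4 :=
  cdu_inverse_plus_monomial_odd_char_even_case_general p n t hodd heven hF c hc G hG
end

section
/- Let n ≥ 4 be an even integer and let G : F_{2^n} → F_{2^n} be given by G(x) = x^{2^n−2} + x^2. Then there exists c ∈ F_{2^n} with c ≠ 1 such that the c-differential uniformity of G satisfies δ_{G,c} = 5. -/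
open Finset

/-!
In characteristic two `G x = x⁻¹ + x²` vanishes exactly on `𝔽₄`, the solution set of `x⁴ = x`.
For `a ∈ 𝔽₄ˣ`, clearing denominators in `G (x + a) - c * G x = 0` gives
`(x² + ax + a²) * ((1 + c) * x² - c * a²) = 0`, while `x * (x + a) * (x² + ax + a²) = x⁴ + x`.
So the solutions are the elements of `𝔽₄` together with the unique `s` such that
`(1 + c) * s² = c * a²`, and `s ∉ 𝔽₄` as soon as `c ∉ 𝔽₄`. This gives an entry `5`.

No entry is larger when `c ≠ 1`: away from `x = 0` and `x = a` the equation
`G (x + a) - c * G x = b` becomes a quartic, so it has at most `4 + 1` solutions unless `0` and `a`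
are distinct and both solve it. This forces `a ∈ 𝔽₄ˣ` and `b = 0`, the case above.
-/

open Polynomial

lemma add_pow_expChar_pow_eq_self {R : Type*} [CommSemiring R] (p n : ℕ) [ExpChar R p] {x y : R}
    (hx : x ^ p ^ n = x) (hy : y ^ p ^ n = y) : (x + y) ^ p ^ n = x + y := by
  rw [add_pow_expChar_pow, hx, hy]

section FiniteField

variable {F : Type*} [Field F] [Fintype F]

lemma card_filter_pow_succ_eq_self [DecidableEq F] (d : ℕ) :
    #{x : F | x ^ (d + 1) = x} = (Fintype.card F - 1).gcd d + 1 := by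
  have hfilter : ({x | x ^ (d + 1) = x} : Finset F) =
      insert 0 (({u | u ^ d = 1} : Finset Fˣ).image Units.val) := by
    ext x
    rcases eq_or_ne x 0 with rfl | hx
    · simp
    · lift x to Fˣ using hx.isUnit
      simp [pow_succ, ← Units.val_pow_eq_pow_val, Units.val_inj]
  have hker : #{u : Fˣ | u ^ d = 1} = (Fintype.card F - 1).gcd d := by
    rw [← Fintype.card_units, ← Nat.card_eq_fintype_card, ← IsCyclic.card_powMonoidHom_ker,
      ← Fintype.card_subtype, ← Nat.card_eq_fintype_card]
    rfl
  rw [hfilter, card_insert_of_notMem (by simp), card_image_of_injective _ Units.val_injective,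
    hker]

lemma exists_pow_succ_ne_self {d : ℕ} (hd : d ≠ 0) (hF : d + 1 < Fintype.card F) :
    ∃ c : F, c ^ (d + 1) ≠ c := by
  classical
  by_contra! h
  have hcard := card_filter_pow_succ_eq_self (F := F) d
  rw [filter_true_of_mem fun x _ => h x, card_univ] at hcard
  have := Nat.gcd_le_right (Fintype.card F - 1) (Nat.pos_of_ne_zero hd)
  lia

variable [DecidableEq F]

lemma card_filter_mul_pow_eq (p : ℕ) [ExpChar F p] {u : F} (hu : u ≠ 0) (v : F) :
    #{x : F | u * x ^ p = v} = 1 := by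
  obtain ⟨r, hr, hunique⟩ := (bijective_frobenius F p).existsUnique (v / u)
  rw [card_eq_one]
  refine ⟨r, ext fun x => ?_⟩
  rw [mem_filter_univ, mem_singleton, mul_comm, ← eq_div_iff hu]
  exact ⟨hunique x, fun hx => hx ▸ hr⟩

end FiniteField

/-- The modified inverse function `x⁻¹ + x²`. On `𝔽_{2^n}` with `n ≥ 2`, field inversion
(with `0⁻¹ = 0`) is the power map `x ↦ x ^ (2 ^ n - 2)`. -/
def invAddSq {F : Type*} [Field F] (x : F) : F :=
  x⁻¹ + x ^ 2

/-- The quartic obtained from `invAddSq (x + a) - c * invAddSq x = b` by clearing the denominators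
`x` and `x + a`. It accounts for all solutions of that equation other than `0` and `-a`. -/
noncomputable def cddtQuartic {F : Type*} [Field F] (c a b : F) : F[X] :=
  C (1 - c) * X ^ 4 + C ((3 - c) * a) * X ^ 3 + C (3 * a ^ 2 - b) * X ^ 2 +
    C (1 - c + a ^ 3 - a * b) * X + C (-(c * a))

section Field

variable {F : Type*} [Field F] {a b c x : F}

@[simp]
lemma invAddSq_zero : invAddSq (0 : F) = 0 := by
  simp [invAddSq]

lemma mul_invAddSq (hx : x ≠ 0) : x * invAddSq x = 1 + x ^ 3 := by
  rw [invAddSq, mul_add, mul_inv_cancel₀ hx]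
  ring

lemma invAddSq_eq_pow_card_sub_two_add_sq [Fintype F] (hF : 2 < Fintype.card F) (x : F) :
    invAddSq x = x ^ (Fintype.card F - 2) + x ^ 2 := by
  rcases eq_or_ne x 0 with rfl | hx
  · simp [Nat.sub_ne_zero_of_lt hF]
  · have hpow : x ^ (Fintype.card F - 2) * x = 1 := by
      rw [← pow_succ, show Fintype.card F - 2 + 1 = Fintype.card F - 1 by lia,
        FiniteField.pow_card_sub_one_eq_one x hx]
    rw [invAddSq, eq_inv_of_mul_eq_one_left hpow]

lemma isRoot_cddtQuartic (hx : x ≠ 0) (hxa : x + a ≠ 0)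
    (h : invAddSq (x + a) - c * invAddSq x = b) : (cddtQuartic c a b).IsRoot x := by
  simp only [IsRoot, cddtQuartic, eval_add, eval_mul, eval_C, eval_pow, eval_X]
  linear_combination
    x * (x + a) * h - x * mul_invAddSq hxa + c * (x + a) * mul_invAddSq hx

lemma natDegree_cddtQuartic_le : (cddtQuartic c a b).natDegree ≤ 4 := by
  unfold cddtQuartic
  compute_degree

lemma cddtQuartic_ne_zero (hc : c ≠ 1) : cddtQuartic c a b ≠ 0 := by
  intro h
  have hcoeff : (cddtQuartic c a b).coeff 4 = 1 - c := by
    unfold cddtQuartic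
    compute_degree!
  rw [h, coeff_zero] at hcoeff
  exact sub_ne_zero.2 hc.symm hcoeff.symm

lemma cddt_invAddSq_le_card_filter_add_four [Fintype F] [DecidableEq F] (hc : c ≠ 1) (a b : F) :
    cddt invAddSq c a b ≤
      #{x ∈ ({0, -a} : Finset F) | invAddSq (x + a) - c * invAddSq x = b} + 4 := by
  have hroots : #(cddtQuartic c a b).roots.toFinset ≤ 4 :=
    (Multiset.toFinset_card_le _).trans ((card_roots' _).trans natDegree_cddtQuartic_le)
  have hsubset : ({x | invAddSq (x + a) - c * invAddSq x = b} : Finset F) ⊆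
      {x ∈ ({0, -a} : Finset F) | invAddSq (x + a) - c * invAddSq x = b} ∪
        (cddtQuartic c a b).roots.toFinset := by
    intro x hx
    rw [mem_filter_univ] at hx
    by_cases hmem : x ∈ ({0, -a} : Finset F)
    · exact mem_union_left _ (mem_filter.2 ⟨hmem, hx⟩)
    · simp only [mem_insert, mem_singleton, not_or, ← add_eq_zero_iff_eq_neg] at hmem
      refine mem_union_right _ (Multiset.mem_toFinset.2 ?_)
      exact (mem_roots (cddtQuartic_ne_zero hc)).2 (isRoot_cddtQuartic hmem.1 hmem.2 hx)
  exact (card_le_card hsubset).trans ((card_union_le _ _).trans (Nat.add_le_add_left hroots _))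

end Field

section CharTwo

variable {F : Type*} [Field F] [CharP F 2] {a b c x : F}

lemma invAddSq_eq_zero_iff_pow_four_eq : invAddSq x = 0 ↔ x ^ 4 = x := by
  rcases eq_or_ne x 0 with rfl | hx
  · simp
  · rw [← mul_right_inj' hx, mul_invAddSq hx, mul_zero, CharTwo.add_eq_zero,
      ← mul_right_inj' hx, mul_one, ← pow_succ', eq_comm]

lemma invAddSq_add_sub_mul_eq_zero_iff (ha : a ^ 3 = 1) :
    invAddSq (x + a) - c * invAddSq x = 0 ↔ x ^ 4 = x ∨ (1 + c) * x ^ 2 = c * a ^ 2 := by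
  have htwo : (2 : F) = 0 := CharTwo.two_eq_zero
  have ha4 : a ^ 4 = a := by linear_combination a * ha
  by_cases hx4 : x ^ 4 = x
  · simp [invAddSq_eq_zero_iff_pow_four_eq.2 hx4,
      invAddSq_eq_zero_iff_pow_four_eq.2 (add_pow_expChar_pow_eq_self 2 2 hx4 ha4), hx4]
  have hx : x ≠ 0 := by rintro rfl; simp at hx4
  have hxa : x + a ≠ 0 := fun h => hx4 (CharTwo.add_eq_zero.1 h ▸ ha4)
  have hquadratic : x ^ 2 + a * x + a ^ 2 ≠ 0 := fun h =>
    hx4 (by linear_combination x * (x - a) * h + x * ha)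
  have hfactor : x * (x + a) * (invAddSq (x + a) - c * invAddSq x) =
      (x ^ 2 + a * x + a ^ 2) * ((1 + c) * x ^ 2 - c * a ^ 2) := by
    linear_combination x * mul_invAddSq hxa - c * (x + a) * mul_invAddSq hx +
      (x + c * x + c * a) * ha + (x + x ^ 2 * a ^ 2 + (1 - c) * x ^ 3 * a - c * x ^ 4) * htwo
  rw [or_iff_right hx4, ← sub_eq_zero (a := (1 + c) * x ^ 2),
    ← mul_eq_zero_iff_left (mul_ne_zero hx hxa), hfactor, mul_eq_zero_iff_left hquadratic]

lemma pow_four_eq_self_of_mul_sq_eq (ha : a ^ 3 = 1) (hx : (1 + c) * x ^ 2 = c * a ^ 2)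
    (hx4 : x ^ 4 = x) : c ^ 4 = c := by
  have htwo : (2 : F) = 0 := CharTwo.two_eq_zero
  have hxa : x ^ 2 + a ^ 2 ≠ 0 := by
    intro h
    have : a ^ 2 = 0 := by linear_combination (1 + c) * h - hx - c * a ^ 2 * htwo
    simp_all
  have hconj : (1 + c ^ 4) * x ^ 2 = c ^ 4 * a ^ 2 :=
    calc
      (1 + c ^ 4) * x ^ 2 = (1 + c) ^ 4 * (x ^ 4) ^ 2 := by
        linear_combination -(1 + c) ^ 4 * (x ^ 4 + x) * hx4 -
          (2 * c + 3 * c ^ 2 + 2 * c ^ 3) * x ^ 2 * htwo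
      _ = ((1 + c) * x ^ 2) ^ 4 := by ring
      _ = c ^ 4 * a ^ 2 := by
        rw [hx]
        linear_combination c ^ 4 * a ^ 2 * (a ^ 3 + 1) * ha
  rw [← CharTwo.add_eq_zero, ← mul_eq_zero_iff_right hxa]
  linear_combination hconj + hx + (c ^ 4 * a ^ 2 + c * a ^ 2 - x ^ 2) * htwo

variable [DecidableEq F]

lemma card_filter_zero_neg_le_one (hc : c ≠ 1) (h : ¬(a ^ 3 = 1 ∧ b = 0)) :
    #{x ∈ ({0, -a} : Finset F) | invAddSq (x + a) - c * invAddSq x = b} ≤ 1 := by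
  contrapose! h
  have ha : a ≠ 0 := by
    rintro rfl
    exact h.not_ge ((card_filter_le _ _).trans (by simp))
  have hsol := card_filter_eq_iff.1 ((card_filter_le _ _).antisymm (card_le_two.trans h))
  have h0 : invAddSq a = b := by simpa using hsol 0 (by simp)
  have h1 : -(c * invAddSq a) = b := by
    simpa only [CharTwo.neg_eq, CharTwo.add_self_eq_zero, invAddSq_zero, zero_sub] using
      hsol (-a) (by simp)
  have hGa : invAddSq a = 0 := by
    refine (mul_eq_zero_iff_left (sub_ne_zero.2 hc.symm)).1 ?_
    linear_combination h0 + h1 + b * CharTwo.two_eq_zero (R := F)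
  refine ⟨?_, by rw [← h0, hGa]⟩
  rw [← mul_left_inj' ha, one_mul, ← pow_succ]
  exact invAddSq_eq_zero_iff_pow_four_eq.1 hGa

variable [Fintype F]

theorem cdu_invAddSq_le_five (hc : c ≠ 1) : cdu invAddSq c ≤ 5 := by
  refine Finset.sup_le fun ⟨a, b⟩ _ => ?_
  by_cases hab : a ^ 3 = 1 ∧ b = 0
  · obtain ⟨ha, rfl⟩ := hab
    calc
      cddt invAddSq c a 0
        ≤ #{x : F | x ^ (3 + 1) = x} + #{x : F | (1 + c) * x ^ 2 = c * a ^ 2} := by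
          simp only [cddt, invAddSq_add_sub_mul_eq_zero_iff ha, filter_or]
          exact card_union_le _ _
      _ = (Fintype.card F - 1).gcd 3 + 1 + 1 := by
          rw [card_filter_pow_succ_eq_self,
            card_filter_mul_pow_eq 2 (CharTwo.add_eq_zero.not.2 hc.symm)]
      _ ≤ 3 + 1 + 1 := by gcongr; exact Nat.gcd_le_right _ three_pos
  · exact (cddt_invAddSq_le_card_filter_add_four hc a b).trans
      (Nat.add_le_add_right (card_filter_zero_neg_le_one hc hab) 4)

lemma cddt_invAddSq_eq_five (h3 : 3 ∣ Fintype.card F - 1) (hc : c ^ 4 ≠ c)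
    (ha : a ^ 3 = 1) : cddt invAddSq c a 0 = 5 := by
  have hc1 : c ≠ 1 := by rintro rfl; simp at hc
  have hdisj : Disjoint ({x | x ^ 4 = x} : Finset F)
      ({x | (1 + c) * x ^ 2 = c * a ^ 2} : Finset F) :=
    disjoint_filter.2 fun x _ hx4 hx => hc (pow_four_eq_self_of_mul_sq_eq ha hx hx4)
  simp only [cddt, invAddSq_add_sub_mul_eq_zero_iff ha, filter_or]
  rw [card_union_of_disjoint hdisj, card_filter_pow_succ_eq_self 3, Nat.gcd_eq_right h3,
    card_filter_mul_pow_eq 2 (CharTwo.add_eq_zero.not.2 hc1.symm)]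

theorem cdu_invAddSq_eq_five (h3 : 3 ∣ Fintype.card F - 1) (hc : c ^ 4 ≠ c) :
    cdu invAddSq c = 5 := by
  have hc1 : c ≠ 1 := by rintro rfl; simp at hc
  refine (cdu_invAddSq_le_five hc1).antisymm ?_
  rw [← cddt_invAddSq_eq_five h3 hc (one_pow 3)]
  exact le_sup (f := fun p : F × F => cddt invAddSq c p.1 p.2) (b := (1, 0)) (by simp)

end CharTwo

theorem exists_c_cdu_eq_five_even_square
    {F : Type*} [Field F] [Fintype F] [DecidableEq F]
    (n : ℕ) (hn : 4 ≤ n) (hneven : Even n)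
    (hF : Fintype.card F = 2 ^ n)
    (G : F → F) (hG : ∀ x : F, G x = x ^ (2 ^ n - 2) + x ^ 2) :
    ∃ c : F, c ≠ 1 ∧ cdu G c = 5 := by
  have : CharP F 2 := charP_of_card_eq_prime_pow hF
  have h16 : 2 ^ 4 ≤ Fintype.card F := hF ▸ Nat.pow_le_pow_right two_pos hn
  have h3 : 3 ∣ Fintype.card F - 1 := by
    simpa [hF] using Nat.pow_sub_one_dvd_pow_sub_one 2 hneven.two_dvd
  have hGinv : G = invAddSq := funext fun x => by
    rw [hG, ← hF, invAddSq_eq_pow_card_sub_two_add_sq (by lia)]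
  obtain ⟨c, hc⟩ : ∃ c : F, c ^ 4 ≠ c := exists_pow_succ_ne_self three_ne_zero (by lia)
  exact ⟨c, by rintro rfl; simp at hc, hGinv ▸ cdu_invAddSq_eq_five h3 hc⟩
end

section
/- Let n ≥ 1 and let a, b ∈ F_{2^n} with b ≠ 0. Then the equation x^3 + a·x + b = 0 has exactly one solution x ∈ F_{2^n} if and only if Tr(a^3/b^2) ≠ Tr(1), where Tr(1) = n mod 2. -/
/-!
Let `r₀, r₁, r₂` be the roots of `x³ + ax + b` in an algebraic closure of `F`. In characteristic two
they are distinct because `b ≠ 0`, and `θ = (r₀²r₁ + r₁²r₂ + r₂²r₀) / b` takes over the role of the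
square root of the discriminant: it satisfies the Artin–Schreier equation `θ² + θ = a³/b² + 1`, an
even permutation of the roots fixes it and an odd one adds `1` to it. The Frobenius map
`x ↦ x^(2^n)` permutes the roots, and those lying in `F` are its fixed points, so there is exactly
one of them iff the permutation is a transposition, i.e. iff `θ^(2^n) ≠ θ`. The trace of `θ² + θ`
telescopes to `θ^(2^n) + θ`, so this says that `Tr (a³/b² + 1) ≠ 0`.
-/

open Finset

/-- The absolute trace of `F_{2^n}`, `Tr x = ∑_{i=0}^{n-1} x^{2^i}`,
viewed as an element of the field (its values lie in the prime subfield). -/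
def Tr {F : Type*} [Field F] (n : ℕ) (x : F) : F :=
  ∑ i ∈ Finset.range n, x ^ 2 ^ i

section Trace

variable {F K : Type*} [Field F] [Field K]

theorem map_Tr (f : F →+* K) (n : ℕ) (x : F) : f (Tr n x) = Tr n (f x) := by
  simp only [Tr, map_sum, map_pow]

theorem Tr_add [CharP F 2] (n : ℕ) (x y : F) : Tr n (x + y) = Tr n x + Tr n y := by
  simp only [Tr, add_pow_char_pow, sum_add_distrib]

theorem Tr_sq_add_self [CharP F 2] (n : ℕ) (x : F) : Tr n (x ^ 2 + x) = x ^ 2 ^ n + x := by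
  have term_eq_sub (i : ℕ) : (x ^ 2 + x) ^ 2 ^ i = x ^ 2 ^ (i + 1) - x ^ 2 ^ i := by
    rw [add_pow_char_pow, ← pow_mul, ← pow_succ', CharTwo.sub_eq_add]
  rw [Tr, sum_congr rfl fun i _ => term_eq_sub i, sum_range_sub (fun i => x ^ 2 ^ i), pow_zero,
    pow_one, CharTwo.sub_eq_add]

end Trace

theorem pow_card_eq_self_iff_mem_range_algebraMap {F K : Type*} [Field F] [Fintype F] [CommRing K]
    [IsDomain K] [Algebra F K] {x : K} :
    x ^ Fintype.card F = x ↔ x ∈ Set.range (algebraMap F K) := by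
  open Polynomial in
  constructor
  · intro hx
    have hsplits : (X ^ Fintype.card F - X : F[X]).Splits := by
      rw [splits_iff_card_roots, FiniteField.roots_X_pow_card_sub_X,
        FiniteField.X_pow_card_sub_X_natDegree_eq F Fintype.one_lt_card, card_val, card_univ]
    exact hsplits.mem_range_of_isRoot
      (FiniteField.X_pow_card_sub_X_ne_zero F Fintype.one_lt_card) (by simp [hx])
  · rintro ⟨y, rfl⟩
    rw [← map_pow, FiniteField.pow_card]

theorem exists_perm_comp_eq_of_mapsTo_range {ι α : Type*} [Finite ι] {r : ι → α} {f : α → α}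
    (hr : r.Injective) (hf : f.Injective) (h : Set.MapsTo f (Set.range r) (Set.range r)) :
    ∃ π : Equiv.Perm ι, f ∘ r = r ∘ π := by
  choose σ hσ using fun i => h (Set.mem_range_self i)
  have σ_injective : σ.Injective := fun i j hij => hr (hf (by rw [← hσ, ← hσ, hij]))
  exact ⟨.ofBijective σ (Finite.injective_iff_bijective.1 σ_injective), funext fun i => (hσ i).symm⟩

section PermFinThree

open Equiv

theorem exists_forall_eq_add_of_sign_eq_one :
    ∀ {π : Perm (Fin 3)}, Perm.sign π = 1 → ∃ k, ∀ i, π i = i + k := by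
  decide

theorem card_fixed_eq_one_iff_sign_eq_neg_one :
    ∀ π : Perm (Fin 3), #{i | π i = i} = 1 ↔ Perm.sign π = -1 := by
  decide

end PermFinThree

/-- The polynomial `r₀²r₁ + r₁²r₂ + r₂²r₀` in the roots of a cubic (indices are taken modulo `3`),
which detects the parity of a permutation of the roots in characteristic two. -/
def cyclicResolvent {R : Type*} [CommSemiring R] (r : Fin 3 → R) : R :=
  ∑ i, r i ^ 2 * r (i + 1)

section CyclicResolvent

variable {R : Type*} [CommSemiring R]

theorem map_cyclicResolvent {S G : Type*} [CommSemiring S] [FunLike G R S] [RingHomClass G R S]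
    (f : G) (r : Fin 3 → R) : f (cyclicResolvent r) = cyclicResolvent (f ∘ r) := by
  simp only [cyclicResolvent, map_sum, map_mul, map_pow, Function.comp_apply]

theorem cyclicResolvent_comp_of_sign_eq_one (r : Fin 3 → R) {π : Equiv.Perm (Fin 3)}
    (hπ : π.sign = 1) : cyclicResolvent (r ∘ π) = cyclicResolvent r := by
  obtain ⟨k, hk⟩ := exists_forall_eq_add_of_sign_eq_one hπ
  simp only [cyclicResolvent, Function.comp_apply, hk, add_right_comm _ 1 k]
  exact Equiv.sum_comp (Equiv.addRight k) fun i => r i ^ 2 * r (i + 1)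

theorem cyclicResolvent_comp_of_sign_eq_neg_one (r : Fin 3 → R) {π : Equiv.Perm (Fin 3)}
    (hπ : π.sign = -1) : cyclicResolvent (r ∘ π) = cyclicResolvent (r ∘ Fin.rev) := by
  have sign_rev_mul : (Fin.revPerm * π).sign = 1 := by
    rw [Equiv.Perm.sign_mul, hπ]
    decide
  rw [← cyclicResolvent_comp_of_sign_eq_one (r ∘ Fin.rev) sign_rev_mul]
  congr 1
  ext i
  simp only [Function.comp_apply, Equiv.Perm.mul_apply, Fin.revPerm_apply, Fin.rev_rev]

end CyclicResolvent

/-- `r` lists the roots of `x³ + ax + b` with multiplicity, as expressed by Vieta's formulas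
(indices are taken modulo `3`). -/
structure IsRootTriple {R : Type*} [CommRing R] (a b : R) (r : Fin 3 → R) : Prop where
  sum_eq : ∑ i, r i = 0
  sum_mul_eq : ∑ i, r i * r (i + 1) = a
  prod_eq : ∏ i, r i = -b

theorem exists_isRootTriple {K : Type*} [Field K] [IsAlgClosed K] (a b : K) :
    ∃ r, IsRootTriple a b r := by
  let P : Cubic K := ⟨1, 0, a, b⟩
  have hP : P.a ≠ 0 := one_ne_zero
  obtain ⟨x, y, z, h⟩ := (Cubic.splits_iff_roots_eq_three (φ := .id K) hP).1 (IsAlgClosed.splits _)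
  have hsum : 0 = 1 * -(x + y + z) := Cubic.b_eq_three_roots hP h
  have hmul : a = 1 * (x * y + x * z + y * z) := Cubic.c_eq_three_roots hP h
  have hprod : b = 1 * -(x * y * z) := Cubic.d_eq_three_roots hP h
  refine ⟨![x, y, z], ?_, ?_, ?_⟩ <;>
    simp only [Fin.sum_univ_three, Fin.prod_univ_three, Fin.isValue, Fin.reduceAdd, zero_add,
      Matrix.cons_val]
  · linear_combination hsum
  · linear_combination -hmul
  · linear_combination hprod

namespace IsRootTriple

section CommRing

variable {R : Type*} [CommRing R] {a b : R} {r : Fin 3 → R}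

theorem cubic_eq_zero_iff_mem_range [IsDomain R] (h : IsRootTriple a b r) {x : R} :
    x ^ 3 + a * x + b = 0 ↔ x ∈ Set.range r := by
  obtain ⟨hsum, hmul, hprod⟩ := h
  simp only [Fin.sum_univ_three, Fin.prod_univ_three, Fin.isValue, Fin.reduceAdd, zero_add]
    at hsum hmul hprod
  have factorization : x ^ 3 + a * x + b = ∏ i, (x - r i) := by
    rw [Fin.prod_univ_three]
    linear_combination x ^ 2 * hsum - x * hmul + hprod
  rw [factorization, prod_eq_zero_iff]
  simp only [mem_univ, true_and, sub_eq_zero, Set.mem_range, eq_comm]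

theorem cyclicResolvent_add_rev (h : IsRootTriple a b r) :
    cyclicResolvent r + cyclicResolvent (r ∘ Fin.rev) = 3 * b := by
  obtain ⟨hsum, -, hprod⟩ := h
  simp only [cyclicResolvent, Fin.sum_univ_three, Fin.prod_univ_three, Function.comp_apply,
    Fin.isValue, Fin.reduceAdd, Fin.reduceRev, Fin.rev_zero, Fin.reduceLast, zero_add]
    at hsum hprod ⊢
  linear_combination (r 0 * r 1 + r 1 * r 2 + r 2 * r 0) * hsum - 3 * hprod

theorem cyclicResolvent_mul_rev (h : IsRootTriple a b r) :
    cyclicResolvent r * cyclicResolvent (r ∘ Fin.rev) = a ^ 3 + 9 * b ^ 2 := by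
  obtain ⟨hsum, rfl, hprod⟩ := h
  obtain rfl : b = -∏ i, r i := by rw [hprod, neg_neg]
  simp only [cyclicResolvent, Fin.sum_univ_three, Fin.prod_univ_three, Function.comp_apply,
    Fin.isValue, Fin.reduceAdd, Fin.reduceRev, Fin.rev_zero, Fin.reduceLast, zero_add] at hsum ⊢
  rw [show r 2 = -(r 0 + r 1) by linear_combination hsum]
  ring

variable [CharP R 2]

theorem injective (h : IsRootTriple a b r) (hb : b ≠ 0) : r.Injective := by
  have add_add_eq_zero : ∀ i j, i ≠ j → r i + r j + r (-i - j) = 0 := by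
    have hsum := h.sum_eq
    rw [Fin.sum_univ_three] at hsum
    intro i j hij
    fin_cases i <;> fin_cases j <;> grind
  intro i j hij
  by_contra hne
  have third_root_eq_zero : r (-i - j) = 0 := by
    simpa only [hij, CharTwo.add_self_eq_zero, zero_add] using add_add_eq_zero i j hne
  exact hb (neg_eq_zero.1 (h.prod_eq ▸ prod_eq_zero (mem_univ _) third_root_eq_zero))

theorem cyclicResolvent_comp_eq_add (h : IsRootTriple a b r) {π : Equiv.Perm (Fin 3)}
    (hπ : π.sign = -1) : cyclicResolvent (r ∘ π) = cyclicResolvent r + b := by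
  rw [cyclicResolvent_comp_of_sign_eq_neg_one r hπ]
  linear_combination h.cyclicResolvent_add_rev +
    (b - cyclicResolvent r) * CharTwo.two_eq_zero (R := R)

theorem cyclicResolvent_sq_add (h : IsRootTriple a b r) :
    cyclicResolvent r ^ 2 + b * cyclicResolvent r = a ^ 3 + b ^ 2 := by
  linear_combination cyclicResolvent r * h.cyclicResolvent_add_rev - h.cyclicResolvent_mul_rev +
    (2 * b * cyclicResolvent r - a ^ 3 - 5 * b ^ 2) * CharTwo.two_eq_zero (R := R)

end CommRing

variable {K : Type*} [Field K] {r : Fin 3 → K}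

section Algebra

variable {F : Type*} [Field F] [Algebra F K] {a b : F}

theorem exists_perm_comp_eq (h : IsRootTriple (algebraMap F K a) (algebraMap F K b) r)
    (hr : r.Injective) (φ : K →ₐ[F] K) : ∃ π : Equiv.Perm (Fin 3), φ ∘ r = r ∘ π := by
  refine exists_perm_comp_eq_of_mapsTo_range hr φ.injective fun x hx => ?_
  rw [← h.cubic_eq_zero_iff_mem_range] at hx ⊢
  simpa only [map_add, map_mul, map_pow, map_zero, AlgHom.commutes] using congrArg φ hx

theorem card_roots_eq_card_fixed [Fintype F] [DecidableEq F]
    (h : IsRootTriple (algebraMap F K a) (algebraMap F K b) r) (hr : r.Injective)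
    {φ : K → K} (hφ : ∀ x, φ x = x ↔ x ∈ Set.range (algebraMap F K))
    {π : Equiv.Perm (Fin 3)} (hπ : φ ∘ r = r ∘ π) :
    #{x : F | x ^ 3 + a * x + b = 0} = #{i | π i = i} := by
  rw [← card_map ⟨_, (algebraMap F K).injective⟩, ← card_map ⟨r, hr⟩]
  congr 1
  ext z
  have root_iff (x : F) : x ^ 3 + a * x + b = 0 ↔ algebraMap F K x ∈ Set.range r := by
    rw [← h.cubic_eq_zero_iff_mem_range, ← (algebraMap F K).injective.eq_iff]
    simp only [map_add, map_mul, map_pow, map_zero]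
  have fixed_iff (i : Fin 3) : π i = i ↔ r i ∈ Set.range (algebraMap F K) := by
    rw [← hφ, ← hr.eq_iff, ← Function.comp_apply (f := r), ← hπ, Function.comp_apply]
  simp only [mem_map, mem_filter_univ, root_iff, fixed_iff, Function.Embedding.coeFn_mk]
  constructor
  · rintro ⟨x, ⟨i, hi⟩, rfl⟩
    exact ⟨i, ⟨x, hi.symm⟩, hi⟩
  · rintro ⟨i, ⟨x, hx⟩, rfl⟩
    exact ⟨x, ⟨i, hx.symm⟩, hx⟩

end Algebra

section CharTwo

variable [CharP K 2] {a b : K}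

theorem map_cyclicResolvent_div_eq_self_iff (h : IsRootTriple a b r) (hb : b ≠ 0) {G : Type*}
    [FunLike G K K] [RingHomClass G K K] {φ : G} (hφb : φ b = b) {π : Equiv.Perm (Fin 3)}
    (hπ : φ ∘ r = r ∘ π) :
    φ (cyclicResolvent r / b) = cyclicResolvent r / b ↔ π.sign = 1 := by
  rw [map_div₀, hφb, div_left_inj' hb, map_cyclicResolvent, hπ]
  rcases Int.units_eq_one_or π.sign with even | odd
  · simp [cyclicResolvent_comp_of_sign_eq_one r even, even]
  · simp [h.cyclicResolvent_comp_eq_add odd, odd, hb]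

theorem Tr_div_eq_Tr_one_iff (h : IsRootTriple a b r) (hb : b ≠ 0) (n : ℕ) :
    Tr n (a ^ 3 / b ^ 2) = Tr n 1 ↔
      (cyclicResolvent r / b) ^ 2 ^ n = cyclicResolvent r / b := by
  have artinSchreier : (cyclicResolvent r / b) ^ 2 + cyclicResolvent r / b =
      a ^ 3 / b ^ 2 + 1 := by
    field_simp
    linear_combination h.cyclicResolvent_sq_add
  rw [← CharTwo.add_eq_zero, ← Tr_add, ← artinSchreier, Tr_sq_add_self, CharTwo.add_eq_zero]

end CharTwo

end IsRootTriple

theorem cubic_unique_solution_iff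
    {F : Type*} [Field F] [Fintype F] [DecidableEq F]
    (n : ℕ) (hn : 1 ≤ n) (hF : Fintype.card F = 2 ^ n)
    (a b : F) (hb : b ≠ 0) :
    (Finset.univ.filter fun x : F => x ^ 3 + a * x + b = 0).card = 1 ↔
      Tr n (a ^ 3 / b ^ 2) ≠ Tr n 1 := by
  have : CharP F 2 := charP_of_card_eq_prime_pow hF
  let K := AlgebraicClosure F
  let ι := algebraMap F K
  have : CharP K 2 := charP_of_injective_algebraMap ι.injective 2
  have hιb : ι b ≠ 0 := (map_ne_zero ι).2 hb
  obtain ⟨r, h⟩ := exists_isRootTriple (ι a) (ι b)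
  let φ := FiniteField.frobeniusAlgHom F K
  obtain ⟨π, hπ⟩ := h.exists_perm_comp_eq (h.injective hιb) φ
  have card_iff : #{x : F | x ^ 3 + a * x + b = 0} = 1 ↔ π.sign = -1 := by
    rw [h.card_roots_eq_card_fixed (h.injective hιb)
      (fun _ => pow_card_eq_self_iff_mem_range_algebraMap) hπ,
      card_fixed_eq_one_iff_sign_eq_neg_one]
  have trace_iff : Tr n (a ^ 3 / b ^ 2) = Tr n 1 ↔ π.sign = 1 := by
    have pow_eq_frobenius (x : K) : x ^ 2 ^ n = φ x := hF ▸ rfl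
    rw [← ι.injective.eq_iff, map_Tr, map_Tr, map_div₀, map_pow, map_pow, map_one,
      h.Tr_div_eq_Tr_one_iff hιb, pow_eq_frobenius,
      h.map_cyclicResolvent_div_eq_self_iff hιb (φ.commutes b) hπ]
  rw [card_iff, ne_eq, trace_iff, ← Int.units_ne_iff_eq_neg]
end

section
/- Let t and n be integers with 1 ≤ t ≤ n. Then gcd(2^t + 1, 2^n − 1) = (2^{gcd(2t,n)} − 1)/(2^{gcd(t,n)} − 1). -/
/-!
Since `a ^ (2 * t) - 1 = (a ^ t - 1) * (a ^ t + 1)`, one hopes that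
`gcd (a ^ (2 * t) - 1) (a ^ n - 1)`, which is `a ^ gcd (2 * t) n - 1`, splits as the product of
`gcd (a ^ t - 1) (a ^ n - 1)`, which is `a ^ gcd t n - 1`, and `gcd (a ^ t + 1) (a ^ n - 1)`.
For even `a` it does: a common divisor of `a ^ gcd t n - 1` and `a ^ t + 1` divides `2`, while
`a ^ gcd t n - 1` is odd.
-/

theorem gcd_mul_eq_gcd_mul_gcd_of_coprime_gcd {x y z : ℕ} (h : (x.gcd z).Coprime y) :
    (x * y).gcd z = x.gcd z * y.gcd z := by
  obtain ⟨x', z', hcop, hx, hz⟩ := Nat.exists_coprime x z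
  set d := x.gcd z
  calc (x * y).gcd z = (d * (x' * y)).gcd (d * z') := by
        rw [hx, hz, mul_comm x', mul_assoc, mul_comm z']
    _ = d * (x' * y).gcd z' := Nat.gcd_mul_left ..
    _ = d * y.gcd z' := by rw [hcop.gcd_mul_left_cancel]
    _ = d * y.gcd z := by rw [hz, h.gcd_mul_right_cancel_right]

theorem pow_two_mul_sub_one (a t : ℕ) : a ^ (2 * t) - 1 = (a ^ t - 1) * (a ^ t + 1) := by
  rw [mul_comm 2 t, pow_mul, ← one_pow 2, Nat.sq_sub_sq, one_pow, mul_comm]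

theorem odd_pow_sub_one {a k : ℕ} (ha : Even a) (ha₀ : a ≠ 0) (hk : k ≠ 0) : Odd (a ^ k - 1) :=
  Nat.Even.sub_odd (Nat.one_le_pow _ _ ha₀.pos) (ha.pow_of_ne_zero hk) odd_one

theorem coprime_add_two_of_odd_of_dvd {d m : ℕ} (hd : Odd d) (h : d ∣ m) : d.Coprime (m + 2) := by
  obtain ⟨k, rfl⟩ := h
  exact (Nat.coprime_mul_left_add_right d 2 k).mpr hd.coprime_two_right

theorem coprime_pow_sub_one_pow_add_one {a g t : ℕ} (ha : Even a) (ha₀ : a ≠ 0) (hg : g ≠ 0)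
    (hgt : g ∣ t) : (a ^ g - 1).Coprime (a ^ t + 1) := by
  have hadd : a ^ t - 1 + 2 = a ^ t + 1 := by have := Nat.one_le_pow t a ha₀.pos; omega
  rw [← hadd]
  exact coprime_add_two_of_odd_of_dvd (odd_pow_sub_one ha ha₀ hg)
    (Nat.pow_sub_one_dvd_pow_sub_one a hgt)

theorem pow_gcd_two_mul_sub_one {a t n : ℕ} (ha : Even a) (ha₀ : a ≠ 0) (h : t.gcd n ≠ 0) :
    a ^ (2 * t).gcd n - 1 = (a ^ t.gcd n - 1) * (a ^ t + 1).gcd (a ^ n - 1) := by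
  have hcop : ((a ^ t - 1).gcd (a ^ n - 1)).Coprime (a ^ t + 1) := by
    rw [Nat.pow_sub_one_gcd_pow_sub_one]
    exact coprime_pow_sub_one_pow_add_one ha ha₀ h (Nat.gcd_dvd_left t n)
  rw [← Nat.pow_sub_one_gcd_pow_sub_one, pow_two_mul_sub_one,
    gcd_mul_eq_gcd_mul_gcd_of_coprime_gcd hcop, Nat.pow_sub_one_gcd_pow_sub_one]

theorem gcd_two_pow_add_one_general {a t n : ℕ} (ha : Even a) (ha₀ : a ≠ 0) (h : t.gcd n ≠ 0) :
    (a ^ t + 1).gcd (a ^ n - 1) = (a ^ (2 * t).gcd n - 1) / (a ^ t.gcd n - 1) :=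
  Nat.eq_div_of_mul_eq_right (odd_pow_sub_one ha ha₀ h).pos.ne'
    (pow_gcd_two_mul_sub_one ha ha₀ h).symm

theorem gcd_two_pow_add_one
    (t n : ℕ) (ht : 1 ≤ t) (htn : t ≤ n) :
    Nat.gcd (2 ^ t + 1) (2 ^ n - 1) =
      (2 ^ Nat.gcd (2 * t) n - 1) / (2 ^ Nat.gcd t n - 1) :=
  gcd_two_pow_add_one_general even_two two_ne_zero (Nat.gcd_pos_of_pos_left n ht).ne'
end

section
/- Let p be an odd prime and let t, n be integers with 1 ≤ t ≤ n. If n/gcd(n,t) is odd, then gcd(p^t + 1, p^n − 1) = 2; if n/gcd(n,t) is even, then gcd(p^t + 1, p^n − 1) = p^{gcd(t,n)} + 1. -/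
/-! Since `(q ^ s + 1) * (q ^ s - 1) = q ^ (2 * s) - 1`, the exponent `m` in
`gcd (q ^ s + 1) (q ^ m - 1)` may be replaced by `gcd (2 * s) m`. Taking `q = p ^ gcd t n` makes
`s` and `m` coprime, so this exponent is `1` or `2`. It is `1` for odd `m`, and `q ^ s ≡ 1` modulo
`q - 1`. It is `2` for even `m`; then `s` is odd, and `q ^ s ≡ q` modulo `q ^ 2 - 1`. -/

theorem pow_add_one_dvd_pow_two_mul_sub_one (q s : ℕ) : q ^ s + 1 ∣ q ^ (2 * s) - 1 := by
  have factorization : q ^ (2 * s) - 1 = (q ^ s + 1) * (q ^ s - 1) := by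
    rw [mul_comm 2 s, pow_mul, ← Nat.sq_sub_sq, one_pow]
  exact Dvd.intro _ factorization.symm

theorem gcd_pow_add_one_pow_sub_one (q s m : ℕ) :
    Nat.gcd (q ^ s + 1) (q ^ m - 1) = Nat.gcd (q ^ s + 1) (q ^ Nat.gcd (2 * s) m - 1) := by
  rw [← Nat.pow_sub_one_gcd_pow_sub_one, ← Nat.gcd_assoc,
    Nat.gcd_eq_left (pow_add_one_dvd_pow_two_mul_sub_one q s)]

theorem pow_modEq_one_sub_one {q : ℕ} (hq : 0 < q) (k : ℕ) : q ^ k ≡ 1 [MOD q - 1] := by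
  simpa only [one_pow] using (Nat.modEq_sub (b := 1) hq).pow k

theorem pow_modEq_self_sq_sub_one {q k : ℕ} (hq : 0 < q) (hk : Odd k) :
    q ^ k ≡ q [MOD q ^ 2 - 1] := by
  obtain ⟨j, rfl⟩ := hk
  rw [pow_succ q (2 * j), pow_mul]
  simpa only [one_mul] using (pow_modEq_one_sub_one (pow_pos hq 2) j).mul_right q

theorem gcd_pow_add_one_sub_one {q : ℕ} (hq : 0 < q) (k : ℕ) :
    Nat.gcd (q ^ k + 1) (q - 1) = Nat.gcd 2 (q - 1) :=
  ((pow_modEq_one_sub_one hq k).add_right 1).gcd_eq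

theorem gcd_pow_add_one_sq_sub_one {q k : ℕ} (hq : 0 < q) (hk : Odd k) :
    Nat.gcd (q ^ k + 1) (q ^ 2 - 1) = q + 1 := by
  rw [((pow_modEq_self_sq_sub_one hq hk).add_right 1).gcd_eq]
  exact Nat.gcd_eq_left (by simpa using pow_add_one_dvd_pow_two_mul_sub_one q 1)

theorem gcd_pow_add_one_pow_sub_one_of_odd {q s m : ℕ} (hq : 0 < q) (hsm : s.Coprime m)
    (hm : Odd m) : Nat.gcd (q ^ s + 1) (q ^ m - 1) = Nat.gcd 2 (q - 1) := by
  have exponent : Nat.gcd (2 * s) m = 1 := (Nat.coprime_two_left.mpr hm).mul_left hsm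
  rw [gcd_pow_add_one_pow_sub_one, exponent, pow_one, gcd_pow_add_one_sub_one hq]

theorem gcd_pow_add_one_pow_sub_one_of_even {q s m : ℕ} (hq : 0 < q) (hsm : s.Coprime m)
    (hm : Even m) : Nat.gcd (q ^ s + 1) (q ^ m - 1) = q + 1 := by
  have hs : Odd s := Nat.coprime_two_right.mp (hsm.coprime_dvd_right hm.two_dvd)
  have exponent : Nat.gcd (2 * s) m = 2 := by
    rw [hsm.gcd_mul_right_cancel, Nat.gcd_eq_left hm.two_dvd]
  rw [gcd_pow_add_one_pow_sub_one, exponent, gcd_pow_add_one_sq_sub_one hq hs]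

theorem gcd_two_pow_sub_one {q d : ℕ} (hq : 0 < q) (hd : d ≠ 0) :
    Nat.gcd 2 (q ^ d - 1) = Nat.gcd 2 (q - 1) := by
  obtain heven | hodd := q.even_or_odd
  · rw [Nat.coprime_two_left.mpr (Nat.Even.sub_odd hq heven odd_one),
      Nat.coprime_two_left.mpr (Nat.Even.sub_odd (pow_pos hq d) (heven.pow_of_ne_zero hd) odd_one)]
  · rw [Nat.gcd_eq_left (hodd.tsub_odd odd_one).two_dvd,
      Nat.gcd_eq_left (hodd.pow.tsub_odd odd_one).two_dvd]

theorem gcd_odd_prime_pow_add_one_general {q t n : ℕ} (hq : 0 < q) (htn : 0 < t ∨ 0 < n) :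
    (Odd (n / Nat.gcd n t) → Nat.gcd (q ^ t + 1) (q ^ n - 1) = Nat.gcd 2 (q - 1)) ∧
    (Even (n / Nat.gcd n t) →
      Nat.gcd (q ^ t + 1) (q ^ n - 1) = q ^ Nat.gcd t n + 1) := by
  have hd : 0 < Nat.gcd t n := Nat.gcd_pos_iff.mpr htn
  have hcoprime := Nat.coprime_div_gcd_div_gcd hd
  have hbase : 0 < q ^ Nat.gcd t n := pow_pos hq _
  have rebase : Nat.gcd (q ^ t + 1) (q ^ n - 1) =
      Nat.gcd ((q ^ Nat.gcd t n) ^ (t / Nat.gcd t n) + 1)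
        ((q ^ Nat.gcd t n) ^ (n / Nat.gcd t n) - 1) := by
    rw [← pow_mul, ← pow_mul, Nat.mul_div_cancel' (Nat.gcd_dvd_left t n),
      Nat.mul_div_cancel' (Nat.gcd_dvd_right t n)]
  rw [Nat.gcd_comm n t, rebase]
  refine ⟨fun hodd => ?_, gcd_pow_add_one_pow_sub_one_of_even hbase hcoprime⟩
  rw [gcd_pow_add_one_pow_sub_one_of_odd hbase hcoprime hodd, gcd_two_pow_sub_one hq hd.ne']

theorem gcd_odd_prime_pow_add_one
    (p t n : ℕ) (hp : p.Prime) (hodd : Odd p) (ht : 1 ≤ t) (htn : t ≤ n) :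
    (Odd (n / Nat.gcd n t) → Nat.gcd (p ^ t + 1) (p ^ n - 1) = 2) ∧
    (Even (n / Nat.gcd n t) →
      Nat.gcd (p ^ t + 1) (p ^ n - 1) = p ^ Nat.gcd t n + 1) := by
  have h := gcd_odd_prime_pow_add_one_general (n := n) hodd.pos (.inl ht)
  rwa [Nat.gcd_eq_left (hodd.tsub_odd odd_one).two_dvd] at h
end

section
/- Let t and n be integers with 1 ≤ t ≤ n, and suppose that either n is odd, or n ≡ 2 (mod 4) and t is even. Then gcd(2^t + 1, 2^n − 1) = 1, and for every odd prime p, gcd(p^t + 1, p^n − 1) = 2. -/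
/-!
Let `d` divide `a ^ t + 1` and `a ^ n - 1`. If `t * m` is a multiple of `n` for some odd `m`, then
`a ^ (t * m)` is congruent modulo `d` both to `(-1) ^ m = -1` and to `1`, so `d` divides `2`.
The parity of `a` then decides whether the greatest common divisor is `1` or `2`.
-/

theorem dvd_two_of_dvd_pow_add_one_of_dvd_pow_sub_one {R : Type*} [CommRing R] {a d : R}
    {t n m : ℕ} (hm : Odd m) (hdvd : n ∣ t * m) (hadd : d ∣ a ^ t + 1) (hsub : d ∣ a ^ n - 1) :
    d ∣ 2 := by
  have hadd' : d ∣ a ^ (t * m) + 1 :=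
    hadd.trans <| by simpa [pow_mul] using hm.add_dvd_pow_add_pow (a ^ t) 1
  have hsub' : d ∣ a ^ (t * m) - 1 := hsub.trans (dvd_pow_sub_one_of_dvd hdvd)
  have htwo : a ^ (t * m) + 1 - (a ^ (t * m) - 1) = 2 := by ring
  exact htwo ▸ dvd_sub hadd' hsub'

theorem exists_odd_dvd_mul {t n : ℕ} (h : Odd n ∨ (n % 4 = 2 ∧ Even t)) :
    ∃ m, Odd m ∧ n ∣ t * m := by
  rcases h with hn | ⟨hn, ht⟩
  · exact ⟨n, hn, dvd_mul_left n t⟩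
  · refine ⟨n / 2, Nat.odd_iff.mpr (by lia), ?_⟩
    calc n = 2 * (n / 2) := by lia
      _ ∣ t * (n / 2) := mul_dvd_mul_right ht.two_dvd (n / 2)

theorem natGcd_pow_add_one_pow_sub_one_eq_intGcd {a : ℕ} (ha : a ≠ 0) (t n : ℕ) :
    Nat.gcd (a ^ t + 1) (a ^ n - 1) = Int.gcd ((a : ℤ) ^ t + 1) ((a : ℤ) ^ n - 1) := by
  rw [← Int.gcd_natCast_natCast, Nat.cast_sub (Nat.one_le_pow n a ha.pos)]
  simp only [Nat.cast_add, Nat.cast_pow, Nat.cast_one]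

theorem gcd_pow_add_one_special_cases_general {t n m : ℕ} (a : ℤ) (hn : n ≠ 0) (hm : Odd m)
    (hdvd : n ∣ t * m) :
    Int.gcd (a ^ t + 1) (a ^ n - 1) = if Even a then 1 else 2 := by
  have hgcd : Int.gcd (a ^ t + 1) (a ^ n - 1) ∣ 2 :=
    Int.natCast_dvd_natCast.mp <| dvd_two_of_dvd_pow_add_one_of_dvd_pow_sub_one hm hdvd
      (Int.gcd_dvd_left ..) (Int.gcd_dvd_right ..)
  split_ifs with ha
  · have hodd : Odd (a ^ n - 1) := (ha.pow_of_ne_zero hn).sub_odd odd_one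
    refine ((Nat.dvd_prime Nat.prime_two).mp hgcd).resolve_right fun htwo => ?_
    have htwo_dvd : 2 ∣ a ^ n - 1 := by
      simpa [htwo] using Int.gcd_dvd_right (a ^ t + 1) (a ^ n - 1)
    exact Int.not_even_iff_odd.mpr hodd (even_iff_two_dvd.mpr htwo_dvd)
  · have hodd : Odd a := Int.not_even_iff_odd.mp ha
    exact hgcd.antisymm <| Int.dvd_gcd
      (hodd.pow.add_odd odd_one).two_dvd (hodd.pow.sub_odd odd_one).two_dvd

theorem gcd_pow_add_one_special_cases
    (t n : ℕ) (ht : 1 ≤ t) (htn : t ≤ n)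
    (h : Odd n ∨ (n % 4 = 2 ∧ Even t)) :
    Nat.gcd (2 ^ t + 1) (2 ^ n - 1) = 1 ∧
    ∀ p : ℕ, p.Prime → Odd p → Nat.gcd (p ^ t + 1) (p ^ n - 1) = 2 := by
  obtain ⟨m, hm, hdvd⟩ := exists_odd_dvd_mul h
  have hgcd (a : ℕ) := gcd_pow_add_one_special_cases_general (a : ℤ) (by lia) hm hdvd
  refine ⟨by simpa [natGcd_pow_add_one_pow_sub_one_eq_intGcd] using hgcd 2, fun p hp hodd => ?_⟩
  rw [natGcd_pow_add_one_pow_sub_one_eq_intGcd hp.ne_zero, hgcd, if_neg (by simpa using hodd)]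
end
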